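/- For all n ≥ 0: ∑_{k=0}^{n} (-1)^k·U(n,k)·((2k-1)!!)²/((2k+1)·4^k) = B_{2n}, where U(n,k) are the generalized Stirling numbers for weights w(m)=((2m+1)/2)² and B the Bernoulli numbers. -/

import Mathlib

/-- Generalized Stirling numbers of the second kind for the weights
w(m) = ((2m+1)/2)²: U(n,k) = U(n-1,k-1) + ((2k+1)/2)² U(n-1,k),
U(0,k)=[k=0], U(n,0) = (1/4)^n. -/
noncomputable def genStirlingU : ℕ → ℕ → ℚ
  | 0, 0 => 1
  | 0, _ + 1 => 0
  | n + 1, 0 => (1 / 4) * genStirlingU n 0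
  | n + 1, k + 1 => genStirlingU n k + ((2 * (k + 1) + 1) / 2 : ℚ) ^ 2 * genStirlingU n (k + 1)

/-- The odd double factorial (2k-1)!! = (2k)!/(2^k k!). -/
noncomputable def oddDoubleFactorial (k : ℕ) : ℚ :=
  ((2 * k).factorial : ℚ) / (2 ^ k * (k.factorial : ℚ))

open Polynomial in
noncomputable def bernL : ℚ[X] →ₗ[ℚ] ℚ :=
  Polynomial.lsum fun m => _root_.bernoulli m • (LinearMap.id : ℚ →ₗ[ℚ] ℚ)

open Polynomial in
lemma bernL_X_pow (m : ℕ) : bernL (X ^ m) = _root_.bernoulli m := by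
  rw [← monomial_one_right_eq_X_pow]
  simp [bernL, Polynomial.lsum_apply, Polynomial.sum_monomial_index]

open Polynomial in
lemma bernL_diff_X_pow (m : ℕ) :
    bernL ((X + 1) ^ m - X ^ m) = (derivative (X ^ m : ℚ[X])).eval 0 := by
  have h : ((X + 1) ^ m - X ^ m : ℚ[X])
      = ∑ k ∈ Finset.range m, (m.choose k : ℚ) • X ^ k := by
    rw [add_pow, Finset.sum_range_succ]
    simp [smul_eq_C_mul, mul_comm]
  rw [h, map_sum]
  simp only [map_smul, bernL_X_pow, smul_eq_mul]
  rw [_root_.sum_bernoulli]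
  rcases m with _ | _ | m <;> simp

open Polynomial in
lemma bernL_diff (F : ℚ[X]) :
    bernL (F.comp (X + 1) - F) = (derivative F).eval 0 := by
  induction F using Polynomial.induction_on' with
  | add p q hp hq =>
    rw [add_comp, derivative_add, eval_add, ← hp, ← hq, ← map_add]
    congr 1; ring
  | monomial m a =>
    have h := bernL_diff_X_pow m
    rw [← smul_X_eq_monomial, smul_comp, X_pow_comp, ← smul_sub, map_smul, h,
      derivative_smul, eval_smul]

open Polynomial in
noncomputable def PP : ℕ → ℚ[X]
  | 0 => 1
  | k + 1 => PP k * (X ^ 2 - C (((2 * k + 1) / 2 : ℚ) ^ 2))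

open Polynomial in
lemma PP_shift (k : ℕ) : (PP k).comp (X + 1) * (X + C (1 / 2 - k : ℚ))
    = PP k * (X + C (1 / 2 + k : ℚ)) := by
  induction k with
  | zero => simp [PP]
  | succ k ih =>
    have e1 : ((X + 1) ^ 2 - C (((2 * k + 1) / 2 : ℚ) ^ 2) : ℚ[X])
        = (X + C (1 / 2 - k : ℚ)) * (X + C (3 / 2 + k : ℚ)) := by
      apply Polynomial.funext; intro x; simp; ring
    have e2 : (X ^ 2 - C (((2 * k + 1) / 2 : ℚ) ^ 2) : ℚ[X])
        = (X + C (1 / 2 + k : ℚ)) * (X + C (-1 / 2 - k : ℚ)) := by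
      apply Polynomial.funext; intro x; simp; ring
    have e3 : (1 / 2 - (k + 1 : ℕ) : ℚ) = -1 / 2 - k := by push_cast; ring
    have e4 : (1 / 2 + (k + 1 : ℕ) : ℚ) = 3 / 2 + k := by push_cast; ring
    rw [e3, e4]
    simp only [PP, mul_comp, sub_comp, X_pow_comp, C_comp]
    rw [e1, e2]
    linear_combination (X + C (3 / 2 + k : ℚ)) * (X + C (-1 / 2 - k : ℚ)) * ih

open Polynomial in
lemma PP_deriv (k : ℕ) : (derivative (PP k)).eval 0 = 0 := by
  induction k with
  | zero => simp [PP]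
  | succ k ih => simp [PP, ih, -map_pow]

open Polynomial in
lemma bernL_PP (k : ℕ) : (2 * k + 1) * bernL (PP k) = (PP k).eval 0 := by
  have h := bernL_diff (PP k * (X + C (-1 / 2 - k : ℚ)))
  have e : (PP k * (X + C (-1 / 2 - k : ℚ))).comp (X + 1) - PP k * (X + C (-1 / 2 - k : ℚ))
      = (2 * k + 1 : ℚ) • PP k := by
    have e1 : ((X + 1 : ℚ[X]) + C (-1 / 2 - k : ℚ)) = X + C (1 / 2 - k : ℚ) := by
      apply Polynomial.funext; intro x; simp; ring
    have e2 : (C (2 * k + 1 : ℚ) : ℚ[X]) = (X + C (1 / 2 + k : ℚ)) - (X + C (-1 / 2 - k : ℚ)) := by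
      apply Polynomial.funext; intro x; simp; ring
    rw [mul_comp, add_comp, X_comp, C_comp, e1, PP_shift, smul_eq_C_mul, e2]
    ring
  rw [e, map_smul, smul_eq_mul] at h
  rw [h]
  simp [PP_deriv]

open Polynomial in
lemma PP_eval (k : ℕ) :
    (PP k).eval 0 = (-1) ^ k * (oddDoubleFactorial k) ^ 2 / 4 ^ k := by
  induction k with
  | zero => simp [PP, oddDoubleFactorial]
  | succ k ih =>
    have h : oddDoubleFactorial (k + 1) = (2 * k + 1) * oddDoubleFactorial k := by
      unfold oddDoubleFactorial
      rw [show 2 * (k + 1) = 2 * k + 1 + 1 by ring, Nat.factorial_succ, Nat.factorial_succ,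
        Nat.factorial_succ]
      have := Nat.factorial_ne_zero k
      push_cast
      field_simp
      ring
    rw [h]
    simp only [PP, eval_mul, ih, eval_sub, eval_pow, eval_X, eval_C]
    field_simp
    ring

lemma genU_zero (n : ℕ) : ∀ k, n < k → genStirlingU n k = 0 := by
  induction n with
  | zero => intro k hk; cases k with
    | zero => omega
    | succ k => simp [genStirlingU]
  | succ n ih => intro k hk; cases k with
    | zero => omega
    | succ k => simp [genStirlingU, ih k (by omega), ih (k + 1) (by omega)]

open Polynomial in
lemma X_pow_expand (n : ℕ) :
    (X ^ (2 * n) : ℚ[X]) = ∑ k ∈ Finset.range (n + 1), C (genStirlingU n k) * PP k := by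
  induction n with
  | zero => simp [PP, genStirlingU]
  | succ n ih =>
    have key : ∀ k : ℕ, X ^ 2 * (C (genStirlingU n k) * PP k)
        = C (genStirlingU n k) * PP (k + 1)
          + C (((2 * k + 1) / 2 : ℚ) ^ 2 * genStirlingU n k) * PP k := by
      intro k
      simp only [PP, C_mul]; ring
    rw [show 2 * (n + 1) = 2 + 2 * n by ring, pow_add, ih, Finset.mul_sum,
      Finset.sum_congr rfl (fun k _ => key k), Finset.sum_add_distrib,
      Finset.sum_range_succ' _ (n + 1)]
    have h2 := Finset.sum_range_succ
      (fun k : ℕ => C (((2 * k + 1) / 2 : ℚ) ^ 2 * genStirlingU n k) * PP k) (n + 1)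
    rw [genU_zero n (n + 1) (by omega)] at h2
    simp only [mul_zero, C_0, zero_mul, add_zero] at h2
    rw [← h2, Finset.sum_range_succ' _ (n + 1), ← add_assoc, ← Finset.sum_add_distrib]
    congr 1
    · apply Finset.sum_congr rfl
      intro k _
      simp only [genStirlingU, C_add]
      push_cast
      ring
    · simp only [genStirlingU]
      norm_num

theorem sum_genStirlingU_bernoulli (n : ℕ) :
    ∑ k ∈ Finset.range (n + 1),
        (-1 : ℚ) ^ k * genStirlingU n k * (oddDoubleFactorial k) ^ 2 /
          ((2 * k + 1) * 4 ^ k) =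
      bernoulli (2 * n) := by
  rw [← bernL_X_pow, X_pow_expand, map_sum]
  apply Finset.sum_congr rfl
  intro k _
  rw [← Polynomial.smul_eq_C_mul, map_smul, smul_eq_mul]
  have h := bernL_PP k
  rw [PP_eval] at h
  have hk : (2 * k + 1 : ℚ) ≠ 0 := by positivity
  have h' : bernL (PP k) = (-1) ^ k * (oddDoubleFactorial k) ^ 2 / 4 ^ k / (2 * k + 1) := by
    rw [← h]; field_simp
  rw [h']
  field_simp
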